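/- For every integer k ≥ 1, the minimum real compatibility degree s_ℝ(2, 2, (2, k+1)) — the infimum, over all pairs consisting of a 2-outcome real POVM E and a (k+1)-outcome real POVM F on ℝ², of the compatibility degree of (E, F) — equals (k−1+√(k+1))/(2k). Moreover, this value is attained by the pair E = ((1/2)·[[1,1],[1,1]], (1/2)·[[1,−1],[−1,1]]) and F = (diag(0,1), diag(1,0), 0_2, …, 0_2) (the (k+1)-outcome POVM whose first two effects are diag(0,1) and diag(1,0) and whose remaining k−1 effects are the zero matrix): the compatibility degree of this pair (E, F) equals (k−1+√(k+1))/(2k). -/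

import Mathlib

open Matrix

/-- A (real) POVM: a family of PSD real symmetric matrices summing to the identity. -/
def IsPOVM {d : ℕ} {ι : Type*} [Fintype ι] (E : ι → Matrix (Fin d) (Fin d) ℝ) : Prop :=
  (∀ i, (E i).PosSemidef) ∧ ∑ i, E i = 1

/-- Two real POVMs are compatible if they admit a joint POVM with the given marginals. -/
def Compatible {d m₁ m₂ : ℕ} (E : Fin m₁ → Matrix (Fin d) (Fin d) ℝ)
    (F : Fin m₂ → Matrix (Fin d) (Fin d) ℝ) : Prop :=
  ∃ J : Fin m₁ × Fin m₂ → Matrix (Fin d) (Fin d) ℝ,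
    IsPOVM J ∧ (∀ a, E a = ∑ b, J (a, b)) ∧ (∀ b, F b = ∑ a, J (a, b))

/-- The noisy version at level `s` of an `m`-outcome POVM: `E_i(s) = s·E_i + (1−s)·I/m`. -/
noncomputable def noisy {d m : ℕ} (s : ℝ) (E : Fin m → Matrix (Fin d) (Fin d) ℝ) :
    Fin m → Matrix (Fin d) (Fin d) ℝ :=
  fun i => s • E i + ((1 - s) / (m : ℝ)) • (1 : Matrix (Fin d) (Fin d) ℝ)

/-- The compatibility degree of a pair of real POVMs: the supremum of those `s ∈ [0,1]` for
which the noisy versions at level `s` are compatible. -/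
noncomputable def compatDeg {d m₁ m₂ : ℕ} (E : Fin m₁ → Matrix (Fin d) (Fin d) ℝ)
    (F : Fin m₂ → Matrix (Fin d) (Fin d) ℝ) : ℝ :=
  sSup {s : ℝ | s ∈ Set.Icc (0 : ℝ) 1 ∧ Compatible (noisy s E) (noisy s F)}

/-- The Hadamard-basis measurement `E = ((1/2)[[1,1],[1,1]], (1/2)[[1,−1],[−1,1]])`. -/
noncomputable def Eopt : Fin 2 → Matrix (Fin 2) (Fin 2) ℝ := fun i =>
  if i = 0 then (1 / 2 : ℝ) • !![1, 1; 1, 1] else (1 / 2 : ℝ) • !![1, -1; -1, 1]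

/-- The `(k+1)`-outcome POVM `F = (diag(0,1), diag(1,0), 0, …, 0)`. -/
noncomputable def Fopt (k : ℕ) : Fin (k + 1) → Matrix (Fin 2) (Fin 2) ℝ := fun i =>
  if (i : ℕ) = 0 then !![0, 0; 0, 1]
  else if (i : ℕ) = 1 then !![1, 0; 0, 0]
  else 0

/-!
Let `A` be a two-outcome POVM and `B` a POVM. A joint POVM for `A` and `B` is a decomposition
`A₀ = ∑ J_b` with `0 ≤ J_b ≤ B_b`, and by Hahn-Banach separation it suffices to dominate `A₀` in
every linear functional. On real symmetric `2 × 2` matrices a functional either has constant sign on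
positive semidefinite matrices, which is easily handled, or it is a bilinear evaluation
`J ↦ pᵀJq`. The maximum of the latter over `0 ≤ J ≤ G` is `(pᵀGq + √(pᵀGp) √(qᵀGq)) / 2`, so `A`
and `B` are compatible if and only if `2 pᵀA₀q ≤ pᵀq + ∑ √(pᵀB_b p) √(qᵀB_b q)` for all `p, q`.

At noise level `s` the excess `2 pᵀA₀q - pᵀq` is at most `s ‖p‖ ‖q‖`, while concavity of the square
root bounds the sum below by `‖p‖ ‖q‖` times the fidelity of two noisy point masses. Hence any `s`
not exceeding this fidelity is good for every pair. For the pair `(Eopt, Fopt k)` both estimates are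
equalities at the standard basis vectors `p, q`, so there the condition is also necessary.
-/

open scoped MatrixOrder Pointwise

lemma isSymm_of_nonneg {ι : Type*} {M : Matrix ι ι ℝ} (hM : 0 ≤ M) : M.IsSymm := by
  simpa [IsSymm] using hM.posSemidef.isHermitian.eq

section FormNorm

variable {ι : Type*} [Fintype ι] {M G J : Matrix ι ι ℝ}

/-- The seminorm `p ↦ √(pᵀMp)` attached to a positive semidefinite matrix `M`. -/
noncomputable def formNorm (M : Matrix ι ι ℝ) (p : ι → ℝ) : ℝ :=
  √(p ⬝ᵥ M *ᵥ p)

lemma formNorm_nonneg (M : Matrix ι ι ℝ) (p : ι → ℝ) : 0 ≤ formNorm M p :=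
  Real.sqrt_nonneg _

lemma dotProduct_mulVec_self_nonneg (hM : 0 ≤ M) (p : ι → ℝ) : 0 ≤ p ⬝ᵥ M *ᵥ p := by
  simpa using hM.posSemidef.dotProduct_mulVec_nonneg p

lemma formNorm_sq (hM : 0 ≤ M) (p : ι → ℝ) : formNorm M p ^ 2 = p ⬝ᵥ M *ᵥ p :=
  Real.sq_sqrt (dotProduct_mulVec_self_nonneg hM p)

lemma dotProduct_mulVec_comm_of_nonneg (hM : 0 ≤ M) (p q : ι → ℝ) :
    p ⬝ᵥ M *ᵥ q = q ⬝ᵥ M *ᵥ p := by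
  rw [dotProduct_comm, dotProduct_mulVec, ← mulVec_transpose, isSymm_of_nonneg hM]

lemma abs_dotProduct_mulVec_le (hM : 0 ≤ M) (p q : ι → ℝ) :
    |p ⬝ᵥ M *ᵥ q| ≤ formNorm M p * formNorm M q := by
  classical
  refine abs_le_of_sq_le_sq ?_ (mul_nonneg (formNorm_nonneg M p) (formNorm_nonneg M q))
  rw [mul_pow, formNorm_sq hM, formNorm_sq hM]
  simpa only [toBilin'_apply'] using LinearMap.BilinForm.apply_sq_le_of_symm (toBilin' M)
    (fun x => by simpa only [toBilin'_apply'] using dotProduct_mulVec_self_nonneg hM x)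
    ⟨(isSymm_toBilin'_iff_isSymm.2 (isSymm_of_nonneg hM)).eq⟩ p q

lemma formNorm_mul_add_formNorm_mul_le {N : Matrix ι ι ℝ} (hM : 0 ≤ M) (hN : 0 ≤ N)
    (p q : ι → ℝ) :
    formNorm M p * formNorm M q + formNorm N p * formNorm N q ≤
      formNorm (M + N) p * formNorm (M + N) q := by
  simpa [formNorm, add_mulVec, dotProduct_add] using
    Real.sum_sqrt_mul_sqrt_le Finset.univ
      (f := ![p ⬝ᵥ M *ᵥ p, p ⬝ᵥ N *ᵥ p]) (g := ![q ⬝ᵥ M *ᵥ q, q ⬝ᵥ N *ᵥ q])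
      (Fin.forall_fin_two.2
        ⟨dotProduct_mulVec_self_nonneg hM p, dotProduct_mulVec_self_nonneg hN p⟩)
      (Fin.forall_fin_two.2
        ⟨dotProduct_mulVec_self_nonneg hM q, dotProduct_mulVec_self_nonneg hN q⟩)

lemma abs_two_mul_dotProduct_mulVec_sub_le (hJ : J ∈ Set.Icc 0 G) (p q : ι → ℝ) :
    |2 * (p ⬝ᵥ J *ᵥ q) - p ⬝ᵥ G *ᵥ q| ≤ formNorm G p * formNorm G q := by
  have hGJ : 0 ≤ G - J := sub_nonneg.2 hJ.2
  calc |2 * (p ⬝ᵥ J *ᵥ q) - p ⬝ᵥ G *ᵥ q|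
      = |p ⬝ᵥ J *ᵥ q - p ⬝ᵥ (G - J) *ᵥ q| := by
        rw [sub_mulVec, dotProduct_sub]; ring_nf
    _ ≤ |p ⬝ᵥ J *ᵥ q| + |p ⬝ᵥ (G - J) *ᵥ q| := abs_sub _ _
    _ ≤ formNorm J p * formNorm J q + formNorm (G - J) p * formNorm (G - J) q :=
        add_le_add (abs_dotProduct_mulVec_le hJ.1 p q) (abs_dotProduct_mulVec_le hGJ p q)
    _ ≤ formNorm G p * formNorm G q := by
        simpa using formNorm_mul_add_formNorm_mul_le hJ.1 hGJ p q

/-- The rank-one matrix `(Gy)(Gy)ᵀ / (yᵀGy)`, which is `0` when `yᵀGy = 0`. With `y` depending on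
`p` and `q`, it maximises the functional `J ↦ pᵀJq` over `0 ≤ J ≤ G`. -/
noncomputable def rankOnePart (G : Matrix ι ι ℝ) (y : ι → ℝ) : Matrix ι ι ℝ :=
  (y ⬝ᵥ G *ᵥ y)⁻¹ • vecMulVec (G *ᵥ y) (G *ᵥ y)

lemma dotProduct_rankOnePart_mulVec (hG : 0 ≤ G) (y p q : ι → ℝ) :
    p ⬝ᵥ rankOnePart G y *ᵥ q = (p ⬝ᵥ G *ᵥ y) * (y ⬝ᵥ G *ᵥ q) / (y ⬝ᵥ G *ᵥ y) := by
  rw [rankOnePart, smul_mulVec, vecMulVec_mulVec, dotProduct_comm (G *ᵥ y) q,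
    dotProduct_mulVec_comm_of_nonneg hG q y]
  simp only [dotProduct_smul, smul_eq_mul, MulOpposite.smul_eq_mul_unop, MulOpposite.unop_op]
  ring

lemma rankOnePart_mem_Icc (hG : 0 ≤ G) (y : ι → ℝ) : rankOnePart G y ∈ Set.Icc 0 G := by
  have hpos : (rankOnePart G y).PosSemidef :=
    (posSemidef_vecMulVec_self_star (G *ᵥ y)).smul
      (inv_nonneg.2 (dotProduct_mulVec_self_nonneg hG y))
  refine ⟨hpos.nonneg, le_iff.2 <| .of_dotProduct_mulVec_nonneg
    (hG.posSemidef.isHermitian.sub hpos.isHermitian) fun x => ?_⟩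
  rw [star_trivial, sub_mulVec, dotProduct_sub, dotProduct_rankOnePart_mulVec hG,
    dotProduct_mulVec_comm_of_nonneg hG y x, ← sq, sub_nonneg, ← formNorm_sq hG, ← formNorm_sq hG]
  refine div_le_of_le_mul₀ (sq_nonneg _) (sq_nonneg _) ?_
  rw [← mul_pow]
  exact sq_le_sq.2 ((abs_dotProduct_mulVec_le hG x y).trans (le_abs_self _))

lemma exists_mem_Icc_two_mul_dotProduct_mulVec_eq (hG : 0 ≤ G) (p q : ι → ℝ) :
    ∃ J ∈ Set.Icc 0 G,
      2 * (p ⬝ᵥ J *ᵥ q) = p ⬝ᵥ G *ᵥ q + formNorm G p * formNorm G q := by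
  have hcs := abs_le.1 (abs_dotProduct_mulVec_le hG p q)
  have hp := formNorm_sq hG p
  have hq := formNorm_sq hG q
  set P := formNorm G p
  set Q := formNorm G q
  set B := p ⬝ᵥ G *ᵥ q
  rcases hcs.1.eq_or_lt with h | h
  · exact ⟨0, ⟨le_rfl, hG⟩, by simp [← h]⟩
  have hPQ : 0 < P * Q := by linarith [hcs.2]
  have hP : P ≠ 0 := left_ne_zero_of_mul hPQ.ne'
  have hQ : Q ≠ 0 := right_ne_zero_of_mul hPQ.ne'
  have hPQB : P * Q + B ≠ 0 := (by linarith : 0 < P * Q + B).ne'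
  set y := Q • p + P • q with hy
  have hpy : p ⬝ᵥ G *ᵥ y = P * (P * Q + B) := by
    simp only [hy, mulVec_add, mulVec_smul, dotProduct_add, dotProduct_smul, smul_eq_mul, ← hp]
    ring
  have hqy : y ⬝ᵥ G *ᵥ q = Q * (P * Q + B) := by
    simp only [hy, add_dotProduct, smul_dotProduct, smul_eq_mul, ← hq]
    ring
  have hyy : y ⬝ᵥ G *ᵥ y = 2 * (P * Q) * (P * Q + B) := by
    rw [dotProduct_mulVec_comm_of_nonneg hG y q] at hqy
    nth_rewrite 1 [hy]
    simp only [add_dotProduct, smul_dotProduct, smul_eq_mul, hpy, hqy]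
    ring
  refine ⟨rankOnePart G y, rankOnePart_mem_Icc hG y, ?_⟩
  rw [dotProduct_rankOnePart_mulVec hG, hpy, hqy, hyy]
  field_simp [hPQB]
  ring

end FormNorm

section Separation

lemma mem_of_forall_exists_le {E : Type*} [AddCommGroup E] [Module ℝ E] [TopologicalSpace E]
    [IsTopologicalAddGroup E] [ContinuousSMul ℝ E] [LocallyConvexSpace ℝ E] {K : Set E}
    (hconv : Convex ℝ K) (hclosed : IsClosed K) {x : E}
    (h : ∀ f : E →ₗ[ℝ] ℝ, ∃ y ∈ K, f x ≤ f y) : x ∈ K := by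
  by_contra hx
  obtain ⟨f, u, hfK, hfx⟩ := geometric_hahn_banach_closed_point hconv hclosed hx
  obtain ⟨y, hyK, hxy⟩ := h f
  exact (hfK y hyK).not_ge (hfx.le.trans hxy)

variable {ι : Type*} [Finite ι]

lemma isClosed_setOf_zero_le_matrix : IsClosed {M : Matrix ι ι ℝ | 0 ≤ M} := by
  cases nonempty_fintype ι
  have hset : {M : Matrix ι ι ℝ | 0 ≤ M} =
      {M | Mᴴ = M} ∩ ⋂ x : ι → ℝ, {M | 0 ≤ star x ⬝ᵥ M *ᵥ x} := by
    ext M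
    simp [nonneg_iff_posSemidef, posSemidef_iff_dotProduct_mulVec, IsHermitian]
  rw [hset]
  exact (isClosed_eq (by fun_prop) continuous_id).inter
    (isClosed_iInter fun x => isClosed_le continuous_const (by fun_prop))

lemma isCompact_Icc_zero_matrix (G : Matrix ι ι ℝ) : IsCompact (Set.Icc 0 G) := by
  classical
  cases nonempty_fintype ι
  let r : ι → ι → ℝ := fun i j => formNorm G (Pi.single i 1) * formNorm G (Pi.single j 1)
  have hbox : IsCompact (Set.univ.pi fun i => Set.univ.pi fun j =>
      Set.Icc ((G i j - r i j) / 2) ((G i j + r i j) / 2) : Set (Matrix ι ι ℝ)) :=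
    isCompact_univ_pi fun i => isCompact_univ_pi fun j => isCompact_Icc
  have hIcc : Set.Icc 0 G = {J | 0 ≤ J} ∩ (G - ·) ⁻¹' {J | 0 ≤ J} :=
    Set.ext fun J => and_congr_right fun _ => sub_nonneg.symm
  have hclosed : IsClosed (Set.Icc 0 G) := hIcc ▸
    isClosed_setOf_zero_le_matrix.inter (isClosed_setOf_zero_le_matrix.preimage (by fun_prop))
  refine hbox.of_isClosed_subset hclosed fun (J : Matrix ι ι ℝ) hJ i _ j _ => ?_
  have hij := abs_le.1 (abs_two_mul_dotProduct_mulVec_sub_le hJ (Pi.single i 1) (Pi.single j 1))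
  simp only [single_dotProduct, mulVec_single_one, col_apply, one_mul] at hij
  constructor <;> linarith

lemma mem_sum_Icc_of_forall_exists_le {κ : Type*} [Fintype κ] {G : κ → Matrix ι ι ℝ}
    {T : Matrix ι ι ℝ}
    (h : ∀ f : Matrix ι ι ℝ →ₗ[ℝ] ℝ, ∃ J : κ → Matrix ι ι ℝ,
      (∀ i, J i ∈ Set.Icc 0 (G i)) ∧ f T ≤ ∑ i, f (J i)) :
    T ∈ ∑ i, Set.Icc 0 (G i) := by
  cases nonempty_fintype ι
  have : LocallyConvexSpace ℝ (Matrix ι ι ℝ) := inferInstanceAs (LocallyConvexSpace ℝ (ι → ι → ℝ))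
  have hcompact : IsCompact (∑ i, Set.Icc 0 (G i)) := by
    rw [← Set.image_fintype_sum_pi]
    exact (isCompact_univ_pi fun i => isCompact_Icc_zero_matrix (G i)).image (by fun_prop)
  refine mem_of_forall_exists_le (convex_sum _ fun i _ => convex_Icc 0 (G i))
    hcompact.isClosed fun f => ?_
  obtain ⟨J, hJ, hle⟩ := h f
  exact ⟨∑ i, J i, Set.mem_fintype_sum _ _ |>.2 ⟨J, hJ, rfl⟩, by rwa [map_sum]⟩

end Separation

section TwoByTwo

lemma posSemidef_fin_two {a b c : ℝ} (ha : 0 ≤ a) (hc : 0 ≤ c) (h : b ^ 2 ≤ a * c) :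
    !![a, b; b, c].PosSemidef := by
  refine .of_dotProduct_mulVec_nonneg (by ext i j; fin_cases i <;> fin_cases j <;> simp) fun x => ?_
  have hx : star x ⬝ᵥ !![a, b; b, c] *ᵥ x = a * x 0 ^ 2 + 2 * (b * x 0 * x 1) + c * x 1 ^ 2 := by
    simp only [dotProduct, Pi.star_apply, star_trivial, mulVec, of_apply, cons_val',
      cons_val_fin_one, Fin.sum_univ_two, cons_val_zero, cons_val_one]
    ring
  rw [hx]
  have hcross : |2 * (b * x 0 * x 1)| ≤ a * x 0 ^ 2 + c * x 1 ^ 2 := by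
    refine abs_le_of_sq_le_sq ?_ (by positivity)
    nlinarith [mul_le_mul_of_nonneg_right h (sq_nonneg (x 0 * x 1)),
      sq_nonneg (a * x 0 ^ 2 - c * x 1 ^ 2)]
  linarith [(abs_le.1 hcross).1]

lemma sum_mul_nonneg_of_nonneg {ι : Type*} [Fintype ι] {A B : Matrix ι ι ℝ} (hA : 0 ≤ A)
    (hB : 0 ≤ B) : 0 ≤ ∑ i, ∑ j, A i j * B i j := by
  simpa [dotProduct, mulVec] using
    dotProduct_mulVec_self_nonneg (hA.posSemidef.hadamard hB.posSemidef).nonneg 1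

lemma exists_mul_eq_of_mul_lt_sq {a b c : ℝ} (h : a * c < b ^ 2) :
    ∃ p₀ p₁ q₀ q₁ : ℝ, p₀ * q₀ = a ∧ p₀ * q₁ + p₁ * q₀ = 2 * b ∧ p₁ * q₁ = c := by
  rcases eq_or_ne a 0 with rfl | ha
  · exact ⟨0, 1, 2 * b, c, by ring, by ring, by ring⟩
  · have hs := Real.sq_sqrt (sub_nonneg.2 h.le)
    refine ⟨a, b + √(b ^ 2 - a * c), 1, (b - √(b ^ 2 - a * c)) / a, by ring, ?_, ?_⟩
    · field_simp; ring
    · field_simp; linarith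

lemma exists_apply_eq_of_nonneg_fin_two (f : Matrix (Fin 2) (Fin 2) ℝ →ₗ[ℝ] ℝ) :
    ∃ a b c : ℝ, ∀ M, 0 ≤ M → f M = a * M 0 0 + 2 * b * M 0 1 + c * M 1 1 := by
  refine ⟨f (single 0 0 1), (f (single 0 1 1) + f (single 1 0 1)) / 2, f (single 1 1 1),
    fun M hM => ?_⟩
  have hsingle (i j : Fin 2) : f (single i j (M i j)) = M i j * f (single i j 1) := by
    rw [← smul_eq_mul, ← map_smul, smul_single, smul_eq_mul, mul_one]
  nth_rewrite 1 [matrix_eq_sum_single M]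
  simp only [Fin.sum_univ_two, map_add, hsingle]
  rw [(isSymm_of_nonneg hM).apply 0 1]
  ring

lemma quadratic_nonneg_of_sq_le {a b c : ℝ} (ha : 0 ≤ a) (hc : 0 ≤ c) (h : b ^ 2 ≤ a * c)
    {M : Matrix (Fin 2) (Fin 2) ℝ} (hM : 0 ≤ M) :
    0 ≤ a * M 0 0 + 2 * b * M 0 1 + c * M 1 1 := by
  convert sum_mul_nonneg_of_nonneg (posSemidef_fin_two ha hc h).nonneg hM using 1
  simp only [of_apply, cons_val', cons_val_fin_one, Fin.sum_univ_two, cons_val_zero, cons_val_one,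
    (isSymm_of_nonneg hM).apply 0 1]
  ring

lemma nonneg_or_nonpos_or_bilinear_of_fin_two (f : Matrix (Fin 2) (Fin 2) ℝ →ₗ[ℝ] ℝ) :
    (∀ M, 0 ≤ M → 0 ≤ f M) ∨ (∀ M, 0 ≤ M → f M ≤ 0) ∨
      ∃ p q : Fin 2 → ℝ, ∀ M, 0 ≤ M → f M = p ⬝ᵥ M *ᵥ q := by
  obtain ⟨a, b, c, hf⟩ := exists_apply_eq_of_nonneg_fin_two f
  rcases lt_or_ge (a * c) (b ^ 2) with h | h
  · obtain ⟨p₀, p₁, q₀, q₁, rfl, hb, rfl⟩ := exists_mul_eq_of_mul_lt_sq h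
    refine .inr (.inr ⟨![p₀, p₁], ![q₀, q₁], fun M hM => ?_⟩)
    simp only [hf M hM, ← hb, dotProduct, mulVec, Fin.sum_univ_two, cons_val_zero, cons_val_one,
      cons_val_fin_one, (isSymm_of_nonneg hM).apply 0 1]
    ring
  rcases mul_nonneg_iff.1 ((sq_nonneg b).trans h) with ⟨ha, hc⟩ | ⟨ha, hc⟩
  · exact .inl fun M hM => (quadratic_nonneg_of_sq_le ha hc h hM).trans_eq (hf M hM).symm
  · refine .inr (.inl fun M hM => ?_)
    have := quadratic_nonneg_of_sq_le (b := -b) (neg_nonneg.2 ha) (neg_nonneg.2 hc)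
      (by linarith) hM
    linarith [hf M hM]

end TwoByTwo

section Compatibility

variable {d n : ℕ} {A : Fin 2 → Matrix (Fin d) (Fin d) ℝ} {B : Fin n → Matrix (Fin d) (Fin d) ℝ}

lemma IsPOVM.sum_dotProduct_mulVec (hB : IsPOVM B) (p q : Fin d → ℝ) :
    ∑ b, p ⬝ᵥ B b *ᵥ q = p ⬝ᵥ q := by
  rw [← dotProduct_sum, ← sum_mulVec, hB.2, one_mulVec]

lemma compatible_iff_mem_sum_Icc (hA : IsPOVM A) (hB : IsPOVM B) :
    Compatible A B ↔ A 0 ∈ ∑ b, Set.Icc 0 (B b) := by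
  rw [Set.mem_fintype_sum]
  constructor
  · rintro ⟨J, ⟨hJ, -⟩, hJA, hJB⟩
    refine ⟨fun b => J (0, b), fun b => ⟨(hJ _).nonneg, ?_⟩, (hJA 0).symm⟩
    rw [hJB b, Fin.sum_univ_two]
    exact le_add_of_nonneg_right (hJ _).nonneg
  · rintro ⟨T, hT, hTA⟩
    have hA1 : A 1 = ∑ b, (B b - T b) := by
      rw [Finset.sum_sub_distrib, hTA, hB.2, ← hA.2, Fin.sum_univ_two, add_sub_cancel_left]
    let J : Fin 2 × Fin n → Matrix (Fin d) (Fin d) ℝ := fun x => ![T x.2, B x.2 - T x.2] x.1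
    have hJA : ∀ a, A a = ∑ b, J (a, b) := Fin.forall_fin_two.2 ⟨hTA.symm, hA1⟩
    refine ⟨J, ⟨?_, ?_⟩, hJA, fun b => by simp [J]⟩
    · rintro ⟨a, b⟩
      revert a
      exact Fin.forall_fin_two.2 ⟨(hT b).1.posSemidef, le_iff.1 (hT b).2⟩
    · rw [Fintype.sum_prod_type, ← hA.2]
      exact Finset.sum_congr rfl fun a _ => (hJA a).symm

lemma Compatible.two_mul_dotProduct_mulVec_le (hA : IsPOVM A) (hB : IsPOVM B)
    (h : Compatible A B) (p q : Fin d → ℝ) :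
    2 * (p ⬝ᵥ A 0 *ᵥ q) ≤ p ⬝ᵥ q + ∑ b, formNorm (B b) p * formNorm (B b) q := by
  obtain ⟨J, hJ, hJA⟩ := (Set.mem_fintype_sum _ _).1 ((compatible_iff_mem_sum_Icc hA hB).1 h)
  rw [← hJA, ← hB.sum_dotProduct_mulVec p q, sum_mulVec, dotProduct_sum, Finset.mul_sum,
    ← Finset.sum_add_distrib]
  refine Finset.sum_le_sum fun b _ => ?_
  linarith [(abs_le.1 (abs_two_mul_dotProduct_mulVec_sub_le (hJ b) p q)).2]

lemma compatible_of_forall_two_mul_dotProduct_mulVec_le {A : Fin 2 → Matrix (Fin 2) (Fin 2) ℝ}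
    {B : Fin n → Matrix (Fin 2) (Fin 2) ℝ} (hA : IsPOVM A) (hB : IsPOVM B)
    (h : ∀ p q, 2 * (p ⬝ᵥ A 0 *ᵥ q) ≤ p ⬝ᵥ q + ∑ b, formNorm (B b) p * formNorm (B b) q) :
    Compatible A B := by
  have hA0 : 0 ≤ A 0 := (hA.1 0).nonneg
  refine (compatible_iff_mem_sum_Icc hA hB).2 (mem_sum_Icc_of_forall_exists_le fun f => ?_)
  rcases nonneg_or_nonpos_or_bilinear_of_fin_two f with hf | hf | ⟨p, q, hf⟩
  · refine ⟨B, fun b => ⟨(hB.1 b).nonneg, le_rfl⟩, ?_⟩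
    rw [← map_sum, hB.2, ← hA.2, Fin.sum_univ_two, map_add]
    exact le_add_of_nonneg_right (hf _ (hA.1 1).nonneg)
  · exact ⟨0, fun b => ⟨le_rfl, (hB.1 b).nonneg⟩, by simpa using hf _ hA0⟩
  · choose J hJ hJeq using fun b =>
      exists_mem_Icc_two_mul_dotProduct_mulVec_eq (hB.1 b).nonneg p q
    refine ⟨J, hJ, le_of_mul_le_mul_left ?_ two_pos⟩
    calc 2 * f (A 0) = 2 * (p ⬝ᵥ A 0 *ᵥ q) := by rw [hf _ hA0]
      _ ≤ p ⬝ᵥ q + ∑ b, formNorm (B b) p * formNorm (B b) q := h p q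
      _ = ∑ b, 2 * (p ⬝ᵥ J b *ᵥ q) := by
        rw [← hB.sum_dotProduct_mulVec, ← Finset.sum_add_distrib]
        exact Finset.sum_congr rfl fun b _ => (hJeq b).symm
      _ = 2 * ∑ b, f (J b) := by
        rw [Finset.mul_sum]
        exact Finset.sum_congr rfl fun b _ => by rw [hf _ (hJ b).1]

end Compatibility

section Noise

variable {d n : ℕ} {s : ℝ}

lemma IsPOVM.noisy [NeZero n] {E : Fin n → Matrix (Fin d) (Fin d) ℝ} (hE : IsPOVM E)
    (hs : s ∈ Set.Icc 0 1) : IsPOVM (noisy s E) := by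
  have hδ : 0 ≤ (1 - s) / n := div_nonneg (sub_nonneg.2 hs.2) n.cast_nonneg
  refine ⟨fun i => ((hE.1 i).smul hs.1).add (PosSemidef.one.smul hδ), ?_⟩
  have hn : (1 - s) / n * n = 1 - s := div_mul_cancel₀ _ (NeZero.ne _)
  simp only [_root_.noisy, Finset.sum_add_distrib, ← Finset.smul_sum, hE.2, Finset.sum_const,
    Finset.card_univ, Fintype.card_fin, ← Nat.cast_smul_eq_nsmul ℝ, smul_smul, hn, ← add_smul,
    add_sub_cancel, one_smul]

lemma dotProduct_noisy_mulVec (s : ℝ) (E : Fin n → Matrix (Fin d) (Fin d) ℝ) (i : Fin n)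
    (p q : Fin d → ℝ) :
    p ⬝ᵥ noisy s E i *ᵥ q = s * (p ⬝ᵥ E i *ᵥ q) + (1 - s) / n * (p ⬝ᵥ q) := by
  simp only [noisy, add_mulVec, smul_mulVec, one_mulVec, dotProduct_add, dotProduct_smul,
    smul_eq_mul]

/-- The fidelity `∑ᵢ √aᵢ √bᵢ` of the probability vectors `a, b` on `n` outcomes obtained from two
distinct point masses by mixing them, with weight `1 - s`, with the uniform distribution. -/
noncomputable def pointMassFidelity (n : ℕ) (s : ℝ) : ℝ :=
  (n - 2) * ((1 - s) / n) + 2 * (√(s + (1 - s) / n) * √((1 - s) / n))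

lemma sqrt_add_mul_le_sqrt {δ a : ℝ} (hs : 0 ≤ s) (hδ : 0 ≤ δ) (ha : a ∈ Set.Icc 0 1) :
    √δ + a * (√(s + δ) - √δ) ≤ √(s * a + δ) := by
  have h := Real.strictConcaveOn_sqrt.concaveOn.2 (Set.mem_Ici.2 hδ)
    (Set.mem_Ici.2 (add_nonneg hs hδ)) (sub_nonneg.2 ha.2) ha.1 (sub_add_cancel 1 a)
  simp only [smul_eq_mul] at h
  calc √δ + a * (√(s + δ) - √δ) = (1 - a) * √δ + a * √(s + δ) := by ring
    _ ≤ √((1 - a) * δ + a * (s + δ)) := h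
    _ = √(s * a + δ) := by ring_nf

lemma pointMassFidelity_le_sum (hs : s ∈ Set.Icc 0 1) {a b : Fin n → ℝ}
    (ha : a ∈ stdSimplex ℝ (Fin n)) (hb : b ∈ stdSimplex ℝ (Fin n)) :
    pointMassFidelity n s ≤ ∑ i, √(s * a i + (1 - s) / n) * √(s * b i + (1 - s) / n) := by
  rw [pointMassFidelity]
  have hδ : 0 ≤ (1 - s) / n := div_nonneg (sub_nonneg.2 hs.2) n.cast_nonneg
  set δ := (1 - s) / n
  set m := √(s + δ) - √δ with hm
  have hm0 : 0 ≤ m := sub_nonneg.2 (Real.sqrt_le_sqrt (le_add_of_nonneg_left hs.1))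
  have hlow {c : Fin n → ℝ} (hc : c ∈ stdSimplex ℝ (Fin n)) (i : Fin n) :
      0 ≤ √δ + c i * m ∧ √δ + c i * m ≤ √(s * c i + δ) :=
    ⟨add_nonneg (Real.sqrt_nonneg δ) (mul_nonneg (hc.1 i) hm0),
      sqrt_add_mul_le_sqrt hs.1 hδ (mem_Icc_of_mem_stdSimplex hc i)⟩
  have hab : 0 ≤ ∑ i, a i * b i := Finset.sum_nonneg fun i _ => mul_nonneg (ha.1 i) (hb.1 i)
  calc (n - 2) * δ + 2 * (√(s + δ) * √δ) = n * √δ ^ 2 + 2 * (√δ * m) := by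
        rw [hm, Real.sq_sqrt hδ]
        linear_combination 2 * Real.sq_sqrt hδ
    _ ≤ n * √δ ^ 2 + 2 * (√δ * m) + m ^ 2 * ∑ i, a i * b i :=
        le_add_of_nonneg_right (mul_nonneg (sq_nonneg m) hab)
    _ = ∑ i, (√δ ^ 2 + √δ * m * (a i + b i) + m ^ 2 * (a i * b i)) := by
        simp only [Finset.sum_add_distrib, ← Finset.mul_sum, ha.2, hb.2, Finset.sum_const,
          Finset.card_univ, Fintype.card_fin, nsmul_eq_mul]
        ring
    _ = ∑ i, (√δ + a i * m) * (√δ + b i * m) := Finset.sum_congr rfl fun i _ => by ring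
    _ ≤ ∑ i, √(s * a i + δ) * √(s * b i + δ) := Finset.sum_le_sum fun i _ =>
        mul_le_mul (hlow ha i).2 (hlow hb i).2 (hlow hb i).1 (Real.sqrt_nonneg _)

lemma formNorm_one_mul_pointMassFidelity_le_sum {F : Fin n → Matrix (Fin d) (Fin d) ℝ}
    (hF : IsPOVM F) (hs : s ∈ Set.Icc 0 1) (p q : Fin d → ℝ) :
    formNorm 1 p * formNorm 1 q * pointMassFidelity n s ≤
      ∑ i, formNorm (noisy s F i) p * formNorm (noisy s F i) q := by
  rcases eq_or_ne p 0 with rfl | hp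
  · simp [formNorm]
  rcases eq_or_ne q 0 with rfl | hq
  · simp [formNorm]
  have hself (x : Fin d → ℝ) : 0 ≤ x ⬝ᵥ x := by simpa using dotProduct_self_star_nonneg x
  let prob (x : Fin d → ℝ) (i : Fin n) : ℝ := (x ⬝ᵥ F i *ᵥ x) / (x ⬝ᵥ x)
  have hprob {x : Fin d → ℝ} (hx : x ≠ 0) : prob x ∈ stdSimplex ℝ (Fin n) := by
    refine ⟨fun i => div_nonneg (dotProduct_mulVec_self_nonneg (hF.1 i).nonneg x)
      (hself x), ?_⟩
    rw [← Finset.sum_div, hF.sum_dotProduct_mulVec, div_self (dotProduct_self_eq_zero.not.2 hx)]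
  have hnorm {x : Fin d → ℝ} (hx : x ≠ 0) (i : Fin n) :
      formNorm (noisy s F i) x = formNorm 1 x * √(s * prob x i + (1 - s) / n) := by
    rw [formNorm, formNorm, one_mulVec, ← Real.sqrt_mul (hself x),
      dotProduct_noisy_mulVec]
    congr 1
    have := dotProduct_self_eq_zero.not.2 hx
    simp only [prob]
    field_simp
  calc formNorm 1 p * formNorm 1 q * pointMassFidelity n s
      ≤ formNorm 1 p * formNorm 1 q *
          ∑ i, √(s * prob p i + (1 - s) / n) * √(s * prob q i + (1 - s) / n) :=
        mul_le_mul_of_nonneg_left (pointMassFidelity_le_sum hs (hprob hp) (hprob hq))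
          (mul_nonneg (formNorm_nonneg _ _) (formNorm_nonneg _ _))
    _ = ∑ i, formNorm (noisy s F i) p * formNorm (noisy s F i) q := by
        simp only [hnorm hp, hnorm hq, Finset.mul_sum, mul_mul_mul_comm]

lemma compatible_noisy_of_le_pointMassFidelity [NeZero n] {E : Fin 2 → Matrix (Fin 2) (Fin 2) ℝ}
    {F : Fin n → Matrix (Fin 2) (Fin 2) ℝ} (hE : IsPOVM E) (hF : IsPOVM F)
    (hs : s ∈ Set.Icc 0 1) (h : s ≤ pointMassFidelity n s) :
    Compatible (noisy s E) (noisy s F) := by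
  refine compatible_of_forall_two_mul_dotProduct_mulVec_le (hE.noisy hs) (hF.noisy hs)
    fun p q => ?_
  have hE0 : E 0 ∈ Set.Icc 0 1 := by
    refine ⟨(hE.1 0).nonneg, ?_⟩
    rw [← hE.2, Fin.sum_univ_two]
    exact le_add_of_nonneg_right (hE.1 1).nonneg
  have hsharp : 2 * (p ⬝ᵥ E 0 *ᵥ q) - p ⬝ᵥ q ≤ formNorm 1 p * formNorm 1 q := by
    simpa only [one_mulVec] using
      (abs_le.1 (abs_two_mul_dotProduct_mulVec_sub_le hE0 p q)).2
  rw [dotProduct_noisy_mulVec, ← sub_le_iff_le_add']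
  calc 2 * (s * (p ⬝ᵥ E 0 *ᵥ q) + (1 - s) / (2 : ℕ) * (p ⬝ᵥ q)) - p ⬝ᵥ q
      = s * (2 * (p ⬝ᵥ E 0 *ᵥ q) - p ⬝ᵥ q) := by push_cast; ring
    _ ≤ s * (formNorm 1 p * formNorm 1 q) := mul_le_mul_of_nonneg_left hsharp hs.1
    _ ≤ formNorm 1 p * formNorm 1 q * pointMassFidelity n s := by
        rw [mul_comm]
        exact mul_le_mul_of_nonneg_left h (mul_nonneg (formNorm_nonneg _ _) (formNorm_nonneg _ _))
    _ ≤ _ := formNorm_one_mul_pointMassFidelity_le_sum hF hs p q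

lemma mul_pointMassFidelity_succ (k : ℕ) (hs : s ≤ 1) :
    (k + 1) * pointMassFidelity (k + 1) s =
      (k - 1) * (1 - s) + √(4 * ((1 - s) * (k * s + 1))) := by
  have hn : (k + 1 : ℝ) ≠ 0 := by positivity
  have hδ : 0 ≤ (1 - s) / (k + 1) := div_nonneg (sub_nonneg.2 hs) (by positivity)
  have hsqrt : √(4 * ((1 - s) * (k * s + 1))) =
      2 * (k + 1) * (√(s + (1 - s) / (k + 1)) * √((1 - s) / (k + 1))) := by
    rw [← Real.sqrt_mul' _ hδ, ← Real.sqrt_sq (by positivity : (0 : ℝ) ≤ 2 * (k + 1)),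
      ← Real.sqrt_mul (sq_nonneg _)]
    congr 1
    field_simp
    ring
  rw [hsqrt, pointMassFidelity]
  push_cast
  field_simp
  ring

lemma le_pointMassFidelity_iff {k : ℕ} (hk : 1 ≤ k) (hs : s ≤ 1) :
    s ≤ pointMassFidelity (k + 1) s ↔ s ≤ (k - 1 + √(k + 1)) / (2 * k) := by
  have hk0 : (0 : ℝ) < k := by exact_mod_cast hk
  have hn : (0 : ℝ) < k + 1 := by positivity
  set L := 2 * k * s - (k - 1) with hL
  have hdisc : 4 * ((1 - s) * (k * s + 1)) = ((k + 1) ^ 2 - L ^ 2) / k := by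
    rw [eq_div_iff hk0.ne', hL]
    ring
  have hleft : s ≤ pointMassFidelity (k + 1) s ↔ L ≤ √(((k + 1) ^ 2 - L ^ 2) / k) := by
    rw [← mul_le_mul_iff_right₀ hn, mul_pointMassFidelity_succ k hs, hdisc]
    constructor <;> intro h <;> linarith
  have hright : s ≤ (k - 1 + √(k + 1)) / (2 * k) ↔ L ≤ √(k + 1) := by
    rw [le_div_iff₀ (by positivity)]
    constructor <;> intro h <;> linarith
  rw [hleft, hright]
  rcases le_or_gt L 0 with hL0 | hL0
  · exact iff_of_true (hL0.trans (Real.sqrt_nonneg _)) (hL0.trans (Real.sqrt_nonneg _))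
  · rw [Real.le_sqrt' hL0, Real.le_sqrt' hL0, le_div_iff₀ hk0]
    exact ⟨fun h => le_of_mul_le_mul_left (by linarith) hn,
      fun h => by linarith [mul_le_mul_of_nonneg_left h hn.le]⟩

lemma sub_one_add_sqrt_div_mem_Icc {k : ℕ} (hk : 1 ≤ k) :
    ((k : ℝ) - 1 + √(k + 1)) / (2 * k) ∈ Set.Icc 0 1 := by
  have hk1 : (1 : ℝ) ≤ k := by exact_mod_cast hk
  have hsqrt : √((k : ℝ) + 1) ≤ k + 1 := Real.sqrt_le_iff.2 ⟨by linarith, by nlinarith⟩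
  constructor
  · have := sub_nonneg.2 hk1
    positivity
  · rw [div_le_one (by linarith)]
    linarith

end Noise

section OptimalPair

lemma isPOVM_Eopt : IsPOVM Eopt := by
  refine ⟨Fin.forall_fin_two.2 ⟨?_, ?_⟩, ?_⟩
  · exact (posSemidef_fin_two one_pos.le one_pos.le (by norm_num)).smul (by norm_num)
  · exact (posSemidef_fin_two one_pos.le one_pos.le (by norm_num)).smul (by norm_num)
  · ext i j
    fin_cases i <;> fin_cases j <;> norm_num [Eopt, Fin.sum_univ_two]

lemma isPOVM_Fopt {k : ℕ} (hk : 1 ≤ k) : IsPOVM (Fopt k) := by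
  refine ⟨fun i => ?_, ?_⟩
  · rw [Fopt]
    split_ifs
    · exact posSemidef_fin_two le_rfl one_pos.le (by norm_num)
    · exact posSemidef_fin_two one_pos.le le_rfl (by norm_num)
    · exact .zero
  · obtain ⟨k, rfl⟩ := Nat.exists_eq_add_of_le' hk
    ext i j
    fin_cases i <;> fin_cases j <;> simp [Fopt, Fin.sum_univ_succ]

lemma sum_formNorm_noisy_Fopt {k : ℕ} (hk : 1 ≤ k) {s : ℝ} (hs : s ≤ 1) :
    ∑ b, formNorm (noisy s (Fopt k) b) (Pi.single 0 1) *
      formNorm (noisy s (Fopt k) b) (Pi.single 1 1) = pointMassFidelity (k + 1) s := by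
  obtain ⟨n, rfl⟩ := Nat.exists_eq_add_of_le' hk
  rw [pointMassFidelity]
  have hδ : 0 ≤ (1 - s) / (n + 1 + 1 : ℕ) := div_nonneg (sub_nonneg.2 hs) (Nat.cast_nonneg _)
  set δ := (1 - s) / (n + 1 + 1 : ℕ) with hδ_def
  have hentry (b : Fin (n + 1 + 1)) (i : Fin 2) :
      formNorm (noisy s (Fopt (n + 1)) b) (Pi.single i 1) = √(s * Fopt (n + 1) b i i + δ) := by
    simp [formNorm, noisy, hδ_def]
  have hsum : ∑ b, √(s * Fopt (n + 1) b 0 0 + δ) * √(s * Fopt (n + 1) b 1 1 + δ) =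
      √δ * √(s + δ) + (√(s + δ) * √δ + n * δ) := by
    simp [Fopt, Fin.sum_univ_succ, Real.mul_self_sqrt hδ]
  simp only [hentry, hsum]
  push_cast
  ring

lemma le_pointMassFidelity_of_compatible_noisy_opt {k : ℕ} (hk : 1 ≤ k) {s : ℝ}
    (hs : s ∈ Set.Icc 0 1) (h : Compatible (noisy s Eopt) (noisy s (Fopt k))) :
    s ≤ pointMassFidelity (k + 1) s := by
  calc s = 2 * (Pi.single 0 1 ⬝ᵥ noisy s Eopt 0 *ᵥ Pi.single 1 1) := by
        have hentry : Pi.single 0 1 ⬝ᵥ noisy s Eopt 0 *ᵥ Pi.single 1 1 = s * (1 / 2) := by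
          simp [noisy, Eopt]
        rw [hentry]
        ring
    _ ≤ Pi.single 0 1 ⬝ᵥ Pi.single 1 1 + ∑ b, formNorm (noisy s (Fopt k) b) (Pi.single 0 1) *
          formNorm (noisy s (Fopt k) b) (Pi.single 1 1) :=
        h.two_mul_dotProduct_mulVec_le (isPOVM_Eopt.noisy hs) ((isPOVM_Fopt hk).noisy hs) _ _
    _ = pointMassFidelity (k + 1) s := by rw [sum_formNorm_noisy_Fopt hk hs.2]; simp

end OptimalPair

/-- The minimum real compatibility degree `s_ℝ(2,2,(2,k+1))` equals
`(k−1+√(k+1))/(2k)`, and it is attained by the pair `(Eopt, Fopt k)`. -/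
theorem stmt_6 (k : ℕ) (hk : 1 ≤ k) :
    sInf {t : ℝ | ∃ (E : Fin 2 → Matrix (Fin 2) (Fin 2) ℝ)
        (F : Fin (k + 1) → Matrix (Fin 2) (Fin 2) ℝ),
        IsPOVM E ∧ IsPOVM F ∧ t = compatDeg E F}
      = ((k : ℝ) - 1 + Real.sqrt ((k : ℝ) + 1)) / (2 * (k : ℝ)) ∧
    IsPOVM Eopt ∧ IsPOVM (Fopt k) ∧
    compatDeg Eopt (Fopt k) = ((k : ℝ) - 1 + Real.sqrt ((k : ℝ) + 1)) / (2 * (k : ℝ)) := by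
  set S : ℝ := ((k : ℝ) - 1 + √((k : ℝ) + 1)) / (2 * (k : ℝ))
  have hS01 : S ∈ Set.Icc 0 1 := sub_one_add_sqrt_div_mem_Icc hk
  have hlower {E : Fin 2 → Matrix (Fin 2) (Fin 2) ℝ} {F : Fin (k + 1) → Matrix (Fin 2) (Fin 2) ℝ}
      (hE : IsPOVM E) (hF : IsPOVM F) : S ≤ compatDeg E F :=
    le_csSup ⟨1, fun _ ht => ht.1.2⟩ ⟨hS01, compatible_noisy_of_le_pointMassFidelity hE hF hS01
      ((le_pointMassFidelity_iff hk hS01.2).2 le_rfl)⟩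
  have hopt : compatDeg Eopt (Fopt k) = S := by
    refine (hlower isPOVM_Eopt (isPOVM_Fopt hk)).antisymm' (Real.sSup_le ?_ hS01.1)
    rintro s ⟨hs, hcomp⟩
    exact (le_pointMassFidelity_iff hk hs.2).1
      (le_pointMassFidelity_of_compatible_noisy_opt hk hs hcomp)
  refine ⟨IsLeast.csInf_eq ⟨⟨Eopt, Fopt k, isPOVM_Eopt, isPOVM_Fopt hk, hopt.symm⟩, ?_⟩,
    isPOVM_Eopt, isPOVM_Fopt hk, hopt⟩
  rintro _ ⟨E, F, hE, hF, rfl⟩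
  exact hlower hE hF
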